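/- For every continuous f : Σ_N^+ → ℝ, every p ∈ V_* ∖ V_0 (so κ_p ≥ 1) and every m ≥ κ_p, H_m(G_μ f)(p) = −∫_{Σ_N^+} χ_p^m f dμ = −∫_{[p_1⋯p_{m+1}]} f dμ. -/

import Mathlib

open Filter Topology MeasureTheory Finset Classical

noncomputable section

/-- The one-sided full shift space `Σ_N^+` on `N` symbols; coordinates are indexed
from `0`, so the paper's `x_1 x_2 ⋯` is `x 0, x 1, ⋯` here. It carries the product
of the discrete topology on `Fin N`. -/
abbrev SSp (N : ℕ) : Type := ℕ → Fin N

/-- The level-`m` vertex set `V_m = {p : p_i = p_{i+1} for all i ≥ m+1}` (1-based),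
i.e. the sequences that are constant from (0-based) coordinate `m` on.  It is
realized as a `Finset` via the parametrization by the first `m+1` coordinates;
see `mem_V` for the defining property. -/
noncomputable def V (N m : ℕ) : Finset (SSp N) :=
  (Finset.univ : Finset (Fin (m + 1) → Fin N)).image
    (fun w j => w ⟨min j m, by omega⟩)

lemma const_from (N m : ℕ) (p : SSp N) (h : ∀ i, m ≤ i → p i = p (i + 1)) :
    ∀ j, m ≤ j → p j = p m := by
  intro j hj
  induction j with
  | zero => have : m = 0 := by omega
            simp [this]
  | succ k ih =>
      rcases Nat.lt_or_ge k m with hk | hk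
      · have : m = k + 1 := by omega
        simp [this]
      · rw [← h k hk]
        exact ih hk

/-- Membership in `V N m` is exactly the paper's condition
`p_i = p_{i+1}` for all `i ≥ m+1` (1-based), i.e. `p i = p (i+1)` for all `i ≥ m`. -/
lemma mem_V {N m : ℕ} {p : SSp N} :
    p ∈ V N m ↔ ∀ i, m ≤ i → p i = p (i + 1) := by
  classical
  constructor
  · intro hp i hi
    simp only [V, Finset.mem_image] at hp
    obtain ⟨w, -, rfl⟩ := hp
    have h1 : min i m = m := by omega
    have h2 : min (i + 1) m = m := by omega
    simp [h1, h2]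
  · intro h
    simp only [V, Finset.mem_image]
    refine ⟨fun j => p j, Finset.mem_univ _, ?_⟩
    funext j
    rcases Nat.lt_or_ge j m with hj | hj
    · have : min j m = j := by omega
      simp [this]
    · have : min j m = m := by omega
      simp only [this]
      exact (const_from N m p h j hj).symm

/-- The deleted neighbourhood `U_{p,m} = {q ∈ V_m : q ≠ p, q_i = p_i for 1 ≤ i ≤ m}`
(1-based), i.e. `q` agrees with `p` on the first `m` (0-based: `i < m`) coordinates. -/
noncomputable def U (N m : ℕ) (p : SSp N) : Finset (SSp N) :=
  (V N m).filter (fun q => q ≠ p ∧ ∀ i, i < m → q i = p i)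

/-- `κ_p = min {j : p ∈ V_j}`. -/
noncomputable def kappa (N : ℕ) (p : SSp N) : ℕ := sInf {j | p ∈ V N j}

/-- The difference operator
`H_m u (p) = Σ_{i = κ_p}^{m} Σ_{q ∈ U_{p,i}} (u(q) − u(p))`. -/
noncomputable def H (N m : ℕ) (u : SSp N → ℝ) (p : SSp N) : ℝ :=
  ∑ i ∈ Finset.Icc (kappa N p) m, ∑ q ∈ U N i p, (u q - u p)

/-- The Dirichlet form `E_{H_m}(u, v) = − Σ_{p ∈ V_m} u(p) · H_m v(p)`. -/
noncomputable def EH (N m : ℕ) (u v : SSp N → ℝ) : ℝ :=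
  -∑ p ∈ V N m, u p * H N m v p

/-- The cylinder set `[p_1 ⋯ p_m]`, determined by the first `m` coordinates of `p`. -/
def cyl (N m : ℕ) (p : SSp N) : Set (SSp N) := {x | ∀ i, i < m → x i = p i}

/-- `χ_p^m` : the indicator function of the cylinder set `[p_1 ⋯ p_{m+1}]`. -/
noncomputable def chi (N m : ℕ) (p : SSp N) : SSp N → ℝ :=
  (cyl N (m + 1) p).indicator 1

/-- `u ∈ dom E`: `u` is continuous and the energy
`E(u) = lim_m E_{H_m}(u|_{V_m})` exists (and is finite). -/
def MemDomE (N : ℕ) (u : SSp N → ℝ) : Prop :=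
  Continuous u ∧ ∃ L : ℝ, Tendsto (fun m => EH N m u u) atTop (nhds L)

/-- `v ∈ dom_M E`: `v` has finite energy and vanishes on the boundary `V_M`. -/
def MemDomME (N M : ℕ) (v : SSp N → ℝ) : Prop :=
  MemDomE N v ∧ ∀ p ∈ V N M, v p = 0

/-- `u ∈ 𝒟_M` with `Δ u = f` (strong formulation with boundary `V_M`):
`u` and `f` are continuous and
`lim_{m → ∞} max_{p ∈ V_m ∖ V_M} |N^{m+1} H_m u(p) − f(p)| = 0`. -/
def IsLaplacianOn (N M : ℕ) (u f : SSp N → ℝ) : Prop :=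
  Continuous u ∧ Continuous f ∧
    ∀ ε : ℝ, 0 < ε → ∃ m₀ : ℕ, ∀ m, m₀ ≤ m → ∀ p ∈ V N m, p ∉ V N M →
      |(N : ℝ) ^ (m + 1) * H N m u p - f p| < ε

/-- `u ∈ D_μ` with `Δ u = f` (original definition of the Laplacian):
`u` and `f` are continuous and
`lim_{m → ∞} max_{p ∈ V_m ∖ V_{m−1}} |N^{m+1} H_m u(p) − f(p)| = 0`
(the level is written `m+1` to avoid natural subtraction). -/
def IsLaplacianDmu (N : ℕ) (u f : SSp N → ℝ) : Prop :=
  Continuous u ∧ Continuous f ∧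
    ∀ ε : ℝ, 0 < ε → ∃ m₀ : ℕ, ∀ m, m₀ ≤ m → ∀ p ∈ V N (m + 1), p ∉ V N m →
      |(N : ℝ) ^ (m + 2) * H N (m + 1) u p - f p| < ε

/-- `μ` is the equidistributed Bernoulli measure:
`μ([p_1 ⋯ p_m]) = N^{−m}` for every cylinder set. -/
def IsBernoulli (N : ℕ) (μ : Measure (SSp N)) : Prop :=
  ∀ (m : ℕ) (p : SSp N), μ (cyl N m p) = (N : ENNReal)⁻¹ ^ m

/-- `ρ(x,y) = min {i : x_i ≠ y_i}` (1-based; `0`-based first disagreement plus one). -/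
noncomputable def rho (N : ℕ) (x y : SSp N) : ℕ := sInf {i | x i ≠ y i} + 1

/-- The matrix `(G_m)_{pq}`: `2/N` if `q = p`, `1/N` if `q ∈ U_{p,m}`, `0` otherwise. -/
noncomputable def Gmat (N m : ℕ) (p q : SSp N) : ℝ :=
  if q = p then 2 / N else if q ∈ U N m p then 1 / N else 0

/-- The Green's function
`g(x,y) = Σ_{m=1}^{ρ(x,y)−1} Σ_{r,s ∈ V_m ∖ V_{m−1}} (G_m)_{rs} χ_r^m(x) χ_s^m(y)`
for `ρ(x,y) > 1`, and `g(x,y) = 0` for `ρ(x,y) = 1` (the sum is then empty). -/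
noncomputable def greenFn (N : ℕ) (x y : SSp N) : ℝ :=
  ∑ m ∈ Finset.Icc 1 (rho N x y - 1),
    ∑ r ∈ (V N m).filter (fun r => r ∉ V N (m - 1)),
      ∑ s ∈ (V N m).filter (fun s => s ∉ V N (m - 1)),
        Gmat N m r s * chi N m r x * chi N m s y

/-- The Green's operator `G_μ f (x) = ∫_{Σ_N^+ ∖ {x}} g(x,y) f(y) dμ(y)`. -/
noncomputable def Gop (N : ℕ) (μ : Measure (SSp N)) (f : SSp N → ℝ) (x : SSp N) : ℝ :=
  ∫ y in ({x}ᶜ : Set (SSp N)), greenFn N x y * f y ∂μ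


/-- The sequence agreeing with `p` before coordinate `i` and constantly `a` from `i` on. -/
def tail (N i : ℕ) (p : SSp N) (a : Fin N) : SSp N := fun j => if j < i then p j else a

/-- The level-`m` summand of the Green's function, evaluated in closed form. -/
def greenTerm (N m : ℕ) (x y : SSp N) : ℝ :=
  if x (m - 1) ≠ x m ∧ y (m - 1) ≠ y m ∧ ∀ i, i < m → x i = y i then
    (if x m = y m then 2 / N else 1 / N : ℝ) else 0

lemma tail_mem_V (N i : ℕ) (p : SSp N) (a : Fin N) : tail N i p a ∈ V N i := by
  rw [mem_V]
  intro j hj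
  simp [tail, not_lt.2 hj, not_lt.2 (hj.trans (Nat.le_succ j))]

lemma eq_tail_iff {N m : ℕ} {r x : SSp N} (hr : r ∈ V N m) :
    r = tail N m x (x m) ↔ ∀ i, i < m + 1 → x i = r i := by
  have hc := const_from N m r (mem_V.1 hr)
  constructor
  · rintro h i hi
    rw [h]
    unfold tail
    split_ifs with h1
    · rfl
    · rw [show i = m by omega]
  · intro h
    funext j
    unfold tail
    split_ifs with h1
    · exact (h j (by omega)).symm
    · rw [hc j (by omega), h m (by omega)]

lemma chi_eq_ite {N m : ℕ} {r : SSp N} (hr : r ∈ V N m) (x : SSp N) :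
    chi N m r x = if r = tail N m x (x m) then 1 else 0 := by
  simp only [chi, Set.indicator_apply, cyl, Set.mem_ofPred_eq, Pi.one_apply, eq_tail_iff hr]

lemma tail_mem_V_pred {N m : ℕ} (hm : 1 ≤ m) (x : SSp N) (a : Fin N) :
    tail N m x a ∈ V N (m - 1) ↔ x (m - 1) = a := by
  rw [mem_V]
  constructor
  · intro h
    have := h (m - 1) le_rfl
    simpa [tail, show m - 1 < m by omega, show m - 1 + 1 = m by omega] using this
  · intro h i hi
    unfold tail
    by_cases h1 : i < m
    · have : i = m - 1 := by omega
      subst this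
      simp [h1, show ¬ (m - 1 + 1 < m) by omega, h]
    · simp [h1, show ¬ (i + 1 < m) by omega]

lemma tail_eq_tail_iff {N m : ℕ} {x y : SSp N} {a b : Fin N} :
    tail N m x a = tail N m y b ↔ (∀ i, i < m → x i = y i) ∧ a = b := by
  constructor
  · intro h
    refine ⟨fun i hi => ?_, ?_⟩
    · simpa [tail, hi] using congrFun h i
    · simpa [tail] using congrFun h m
  · rintro ⟨h, rfl⟩
    funext j
    unfold tail
    split_ifs with h1
    · exact h j h1
    · rfl

lemma Gmat_tail {N m : ℕ} (x y : SSp N) :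
    Gmat N m (tail N m x (x m)) (tail N m y (y m)) =
      if ∀ i, i < m → x i = y i then (if x m = y m then 2 / N else 1 / N : ℝ) else 0 := by
  have hU : tail N m y (y m) ∈ U N m (tail N m x (x m)) ↔
      tail N m y (y m) ≠ tail N m x (x m) ∧ ∀ i, i < m → x i = y i := by
    simp only [U, Finset.mem_filter, tail_mem_V, true_and]
    refine and_congr_right fun _ => forall₂_congr fun i hi => ?_
    simp [tail, hi, eq_comm]
  simp only [Gmat, hU, ne_eq, tail_eq_tail_iff]
  by_cases h : ∀ i, i < m → x i = y i
  · have h' : ∀ i, i < m → y i = x i := fun i hi => (h i hi).symm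
    by_cases h2 : x m = y m
    · rw [if_pos ⟨h', h2.symm⟩, if_pos h, if_pos h2]
    · rw [if_neg fun h3 => h2 h3.2.symm, if_pos ⟨fun h3 => h2 h3.2.symm, h⟩, if_pos h, if_neg h2]
  · have h' : ¬ ∀ i, i < m → y i = x i := fun h' => h fun i hi => (h' i hi).symm
    simp only [h, h', false_and, if_false, and_false]

lemma sum_Gmat_chi_eq_greenTerm {N m : ℕ} (hm : 1 ≤ m) (x y : SSp N) :
    ∑ r ∈ (V N m).filter (fun r => r ∉ V N (m - 1)),
      ∑ s ∈ (V N m).filter (fun s => s ∉ V N (m - 1)),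
        Gmat N m r s * chi N m r x * chi N m s y = greenTerm N m x y := by
  have h1 : ∀ r ∈ (V N m).filter (fun r => r ∉ V N (m - 1)),
      ∑ s ∈ (V N m).filter (fun s => s ∉ V N (m - 1)),
        Gmat N m r s * chi N m r x * chi N m s y =
      ∑ s ∈ (V N m).filter (fun s => s ∉ V N (m - 1)),
        if s = tail N m y (y m) then (if r = tail N m x (x m) then Gmat N m r s else 0) else 0 := by
    intro r hr
    refine Finset.sum_congr rfl fun s hs => ?_
    rw [chi_eq_ite (Finset.mem_filter.1 hr).1, chi_eq_ite (Finset.mem_filter.1 hs).1]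
    split_ifs <;> simp
  rw [Finset.sum_congr rfl h1]
  simp only [Finset.sum_ite_eq', Finset.mem_filter, tail_mem_V, true_and, tail_mem_V_pred hm]
  unfold greenTerm
  by_cases hy : y (m - 1) = y m
  · simp [hy]
  · simp only [hy, not_false_eq_true, if_true, Finset.sum_ite_eq', Finset.mem_filter, tail_mem_V,
      true_and, tail_mem_V_pred hm, Gmat_tail, ne_eq]
    by_cases hx : x (m - 1) = x m
    · simp [hx]
    · simp [hx]

lemma greenTerm_eq_zero_of_mem_V {N m j : ℕ} {x : SSp N} (hx : x ∈ V N m) (hj : m < j)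
    (y : SSp N) : greenTerm N j x y = 0 := by
  have := mem_V.1 hx (j - 1) (by omega)
  rw [show j - 1 + 1 = j by omega] at this
  simp [greenTerm, this]

lemma greenFn_eq_sum_greenTerm {N m : ℕ} {x y : SSp N} (hx : x ∈ V N m) (hxy : x ≠ y) :
    greenFn N x y = ∑ j ∈ Finset.Icc 1 m, greenTerm N j x y := by
  have hd : x (rho N x y - 1) ≠ y (rho N x y - 1) := by
    have hne : {i | x i ≠ y i}.Nonempty := Function.ne_iff.1 hxy
    simpa [rho] using Nat.sInf_mem hne
  unfold greenFn
  rw [Finset.sum_congr rfl fun j hj => sum_Gmat_chi_eq_greenTerm (Finset.mem_Icc.1 hj).1 x y]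
  set d := rho N x y - 1
  have hl : ∑ j ∈ Finset.Icc 1 d, greenTerm N j x y =
      ∑ j ∈ Finset.Icc 1 (max d m), greenTerm N j x y := by
    refine Finset.sum_subset (Finset.Icc_subset_Icc le_rfl (le_max_left _ _)) fun j hj hj' => ?_
    simp only [Finset.mem_Icc] at hj hj'
    unfold greenTerm
    rw [if_neg]
    rintro ⟨-, -, h⟩
    exact hd (h d (by omega))
  rw [hl]
  symm
  refine Finset.sum_subset (Finset.Icc_subset_Icc le_rfl (le_max_right _ _)) fun j hj hj' => ?_
  simp only [Finset.mem_Icc] at hj hj'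
  exact greenTerm_eq_zero_of_mem_V hx (by omega) y

lemma continuous_greenTerm (N j : ℕ) (x : SSp N) : Continuous (greenTerm N j x) := by
  have h : greenTerm N j x =
      (fun w : Fin (j + 1) → Fin N => greenTerm N j x (fun i => w ⟨min i j, by omega⟩)) ∘
        (fun (y : SSp N) (i : Fin (j + 1)) => y i) := by
    funext y
    have hy : ∀ i, i < j → y (min i j) = y i := fun i hi => by rw [min_eq_left hi.le]
    simp +contextual only [greenTerm, Function.comp_apply, hy, min_self,
      min_eq_left (Nat.sub_le j 1)]
  rw [h]
  exact continuous_of_discreteTopology.comp (by fun_prop)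

lemma isClopen_cyl (N m : ℕ) (p : SSp N) : IsClopen (cyl N m p) := by
  have h : cyl N m p = ⋂ i ∈ Finset.range m, (fun x : SSp N => x i) ⁻¹' {p i} := by
    ext x
    simp [cyl]
  rw [h]
  exact isClopen_biInter_finset fun i _ => (isClopen_discrete _).preimage (continuous_apply i)

lemma continuous_chi (N m : ℕ) (p : SSp N) : Continuous (chi N m p) :=
  continuous_one.indicator fun x hx => by
    simp [(isClopen_cyl N (m + 1) p).frontier_eq] at hx

lemma IsBernoulli.measure_singleton {N : ℕ} (hN : 2 ≤ N) {μ : Measure (SSp N)}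
    (hμ : IsBernoulli N μ) (x : SSp N) : μ {x} = 0 := by
  have hlt : (N : ENNReal)⁻¹ < 1 := by
    rw [ENNReal.inv_lt_one]
    exact_mod_cast hN
  refine le_antisymm (ge_of_tendsto'
    (ENNReal.tendsto_pow_atTop_nhds_zero_of_lt_one hlt) fun m => ?_) bot_le
  rw [← hμ m x]
  refine measure_mono fun y hy i _ => ?_
  rw [Set.mem_singleton_iff.1 hy]

lemma integrable_of_continuous {N : ℕ} (μ : Measure (SSp N)) [IsProbabilityMeasure μ]
    {f : SSp N → ℝ} (hf : Continuous f) : Integrable f μ :=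
  hf.integrable_of_hasCompactSupport (HasCompactSupport.of_compactSpace f)

lemma Gop_eq_integral {N m : ℕ} (hN : 2 ≤ N) {μ : Measure (SSp N)} (hμ : IsBernoulli N μ)
    (f : SSp N → ℝ) {x : SSp N} (hx : x ∈ V N m) :
    Gop N μ f x = ∫ y, (∑ j ∈ Finset.Icc 1 m, greenTerm N j x y) * f y ∂μ := by
  have hae : ∀ᵐ y ∂μ, y ∈ ({x}ᶜ : Set (SSp N)) := by
    rw [ae_iff]
    simpa using hμ.measure_singleton hN x
  unfold Gop
  rw [Measure.restrict_eq_self_of_ae_mem hae]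
  refine integral_congr_ae ?_
  filter_upwards [hae] with y hy
  rw [greenFn_eq_sum_greenTerm hx fun h => hy (by simp [h])]

lemma U_eq_image {N i : ℕ} {p : SSp N} (hp : p ∈ V N i) :
    U N i p = (Finset.univ.erase (p i)).image (tail N i p) := by
  have hpt : p = tail N i p (p i) := (eq_tail_iff hp).2 fun _ _ => rfl
  ext q
  simp only [U, Finset.mem_filter, Finset.mem_image, Finset.mem_erase, Finset.mem_univ, and_true]
  constructor
  · rintro ⟨hq, hne, h⟩
    have hqt : tail N i p (q i) = q := by
      conv_rhs => rw [(eq_tail_iff hq).2 fun _ _ => rfl]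
      exact tail_eq_tail_iff.2 ⟨fun j hj => (h j hj).symm, rfl⟩
    refine ⟨q i, fun h' => hne ?_, hqt⟩
    rw [← hqt, h', ← hpt]
  · rintro ⟨a, ha, rfl⟩
    refine ⟨tail_mem_V N i p a, fun h => ha ?_, fun j hj => by simp [tail, hj]⟩
    simpa [tail] using congrFun h i

lemma sum_U {N i : ℕ} {p : SSp N} (hp : p ∈ V N i) (F : SSp N → ℝ) :
    ∑ q ∈ U N i p, F q = ∑ a ∈ Finset.univ.erase (p i), F (tail N i p a) := by
  rw [U_eq_image hp, Finset.sum_image fun a _ b _ h => (tail_eq_tail_iff.1 h).2]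

lemma greenTerm_tail_of_lt {N i j : ℕ} (hj : j < i) (p : SSp N) (a : Fin N) (y : SSp N) :
    greenTerm N j (tail N i p a) y = greenTerm N j p y := by
  have h : ∀ l, l ≤ j → tail N i p a l = p l := fun l hl => by simp [tail, hl.trans_lt hj]
  have h' : ∀ l, l < j → tail N i p a l = p l := fun l hl => h l hl.le
  simp +contextual only [greenTerm, h j le_rfl, h (j - 1) (Nat.sub_le j 1), h']

lemma greenTerm_tail {N i : ℕ} (hi : 1 ≤ i) (p : SSp N) (a : Fin N) (y : SSp N) :
    greenTerm N i (tail N i p a) y =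
      if p (i - 1) ≠ a ∧ y (i - 1) ≠ y i ∧ ∀ l, l < i → p l = y l then
        (if a = y i then 2 / N else 1 / N : ℝ) else 0 := by
  have h' : ∀ l, l < i → tail N i p a l = p l := fun l hl => by simp [tail, hl]
  have h2 : tail N i p a i = a := by simp [tail]
  simp +contextual only [greenTerm, h2, h' (i - 1) (by omega), h']

lemma chi_eq_indicator (N m : ℕ) (p y : SSp N) :
    chi N m p y = if (∀ l, l < m → p l = y l) ∧ p m = y m then 1 else 0 := by
  simp only [chi, Set.indicator_apply, cyl, Set.mem_ofPred_eq, Pi.one_apply,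
    Nat.lt_succ_iff_lt_or_eq, or_imp, forall_and, forall_eq, @eq_comm _ (y _)]

lemma sum_greenTerm_tail {N i : ℕ} (hi : 1 ≤ i) (p y : SSp N) :
    ∑ a, greenTerm N i (tail N i p a) y =
      if (∀ l, l < i → p l = y l) ∧ p (i - 1) ≠ y i then 1 else 0 := by
  have hN : (N : ℝ) ≠ 0 := by
    have := (p 0).pos
    positivity
  simp only [greenTerm_tail hi]
  by_cases hag : ∀ l, l < i → p l = y l
  · have hb : y (i - 1) = p (i - 1) := (hag (i - 1) (by omega)).symm
    by_cases hc : p (i - 1) = y i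
    · simp [hb, hc]
    · have hterm : ∀ a : Fin N,
          (if p (i - 1) ≠ a ∧ p (i - 1) ≠ y i ∧ ∀ l, l < i → p l = y l then
            (if a = y i then 2 / N else 1 / N : ℝ) else 0) =
          1 / N + (if a = y i then 1 / N else 0 : ℝ) - (if a = p (i - 1) then 1 / N else 0 : ℝ) := by
        intro a
        by_cases h1 : a = p (i - 1)
        · simp [h1, hc]
        · have h1' : p (i - 1) ≠ a := Ne.symm h1
          by_cases h2 : a = y i
          · rw [if_pos ⟨h1', hc, hag⟩, if_pos h2, if_pos h2, if_neg h1]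
            ring
          · rw [if_pos ⟨h1', hc, hag⟩, if_neg h2, if_neg h2, if_neg h1]
            ring
      simp only [hb]
      rw [Finset.sum_congr rfl fun a _ => hterm a, if_pos ⟨hag, hc⟩, Finset.sum_sub_distrib,
        Finset.sum_add_distrib]
      simp [hN]
  · simp [hag]

lemma sum_U_greenTerm {N i : ℕ} (hi : 1 ≤ i) {p : SSp N} (hp : p ∈ V N i) (y : SSp N) :
    ∑ q ∈ U N i p, (greenTerm N i q y - greenTerm N i p y) =
      (if (∀ l, l < i → p l = y l) ∧ p (i - 1) ≠ y i then 1 else 0) -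
        N * greenTerm N i p y := by
  have hpt : tail N i p (p i) = p := ((eq_tail_iff hp).2 fun _ _ => rfl).symm
  rw [sum_U hp, Finset.sum_erase _ (by rw [hpt, sub_self]), Finset.sum_sub_distrib,
    sum_greenTerm_tail hi]
  simp

lemma sum_U_greenTerm_of_eq {N i : ℕ} {p : SSp N} (hp : p ∈ V N (i + 1))
    (h : p i = p (i + 1)) (y : SSp N) :
    ∑ q ∈ U N (i + 1) p, (greenTerm N (i + 1) q y - greenTerm N (i + 1) p y) =
      chi N i p y - chi N (i + 1) p y := by
  have h0 : greenTerm N (i + 1) p y = 0 := by simp [greenTerm, h]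
  have hag : (∀ l, l < i + 1 → p l = y l) ↔ (∀ l, l < i → p l = y l) ∧ p i = y i := by
    simp only [Nat.lt_succ_iff_lt_or_eq, or_imp, forall_and, forall_eq]
  rw [sum_U_greenTerm (by omega) hp, h0, chi_eq_indicator, chi_eq_indicator,
    Nat.add_sub_cancel]
  simp only [← hag]
  rw [h]
  by_cases h1 : ∀ l, l < i + 1 → p l = y l
  · by_cases h2 : p (i + 1) = y (i + 1)
    · rw [if_neg (fun h => h.2 h2), if_pos h1, if_pos ⟨h1, h2⟩]
      ring
    · rw [if_pos ⟨h1, h2⟩, if_pos h1, if_neg (fun h => h2 h.2)]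
      ring
  · rw [if_neg (fun h => h1 h.1), if_neg h1, if_neg (fun h => h1 h.1)]
    ring

lemma sum_U_greenTerm_of_ne {N i : ℕ} (hi : 1 ≤ i) {p : SSp N} (hp : p ∈ V N i)
    (h : p (i - 1) ≠ p i) (y : SSp N) :
    ∑ q ∈ U N i p, (greenTerm N i q y - greenTerm N i p y) = - chi N i p y := by
  have hN : (N : ℝ) ≠ 0 := by
    have := (p 0).pos
    positivity
  rw [sum_U_greenTerm hi hp, chi_eq_indicator, greenTerm]
  by_cases h1 : ∀ l, l < i → p l = y l
  · have hb : p (i - 1) = y (i - 1) := h1 (i - 1) (by omega)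
    by_cases h2 : p i = y i
    · have h3 : p (i - 1) ≠ y i := h2 ▸ h
      have h4 : y (i - 1) ≠ y i := hb ▸ h3
      rw [if_pos (show (∀ l, l < i → p l = y l) ∧ p (i - 1) ≠ y i from ⟨h1, h3⟩),
        if_pos ⟨h, h4, h1⟩, if_pos h2, if_pos ⟨h1, h2⟩]
      field_simp
      ring
    · by_cases h3 : p (i - 1) = y i
      · have h4 : y (i - 1) = y i := hb ▸ h3
        simp [h2, h3, h4]
      · have h4 : y (i - 1) ≠ y i := hb ▸ h3
        rw [if_pos ⟨h1, h3⟩, if_pos ⟨h, h4, h1⟩, if_neg h2, if_neg fun h => h2 h.2]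
        field_simp
        ring
  · rw [if_neg (fun h => h1 h.1), if_neg (fun h => h1 h.2.2), if_neg (fun h => h1 h.1)]
    ring

lemma sum_U_Gop {N i : ℕ} (hN : 2 ≤ N) {μ : Measure (SSp N)} [IsProbabilityMeasure μ]
    (hμ : IsBernoulli N μ) {f : SSp N → ℝ} (hf : Continuous f) (hi : 1 ≤ i) {p : SSp N}
    (hp : p ∈ V N i) :
    ∑ q ∈ U N i p, (Gop N μ f q - Gop N μ f p) =
      ∫ y, (∑ q ∈ U N i p, (greenTerm N i q y - greenTerm N i p y)) * f y ∂μ := by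
  have hint : ∀ q, Integrable
      (fun y => (∑ j ∈ Finset.Icc 1 i, greenTerm N j q y) * f y) μ := fun q =>
    integrable_of_continuous μ
      ((continuous_finsetSum _ fun j _ => continuous_greenTerm N j q).mul hf)
  have hint' : ∀ q, Integrable (fun y => (greenTerm N i q y - greenTerm N i p y) * f y) μ :=
    fun q => integrable_of_continuous μ
      (((continuous_greenTerm N i q).sub (continuous_greenTerm N i p)).mul hf)
  simp only [Finset.sum_mul]
  rw [integral_finsetSum _ fun q _ => hint' q]
  refine Finset.sum_congr rfl fun q hq => ?_
  rw [U_eq_image hp] at hq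
  obtain ⟨a, -, rfl⟩ := Finset.mem_image.1 hq
  rw [Gop_eq_integral hN hμ f (tail_mem_V N i p a), Gop_eq_integral hN hμ f hp,
    ← integral_sub (hint _) (hint _)]
  refine integral_congr_ae (Filter.Eventually.of_forall fun y => ?_)
  obtain ⟨n, rfl⟩ : ∃ n, i = n + 1 := ⟨i - 1, by omega⟩
  simp only [Finset.sum_Icc_succ_top (show 1 ≤ n + 1 by omega)]
  rw [Finset.sum_congr rfl fun j hj => greenTerm_tail_of_lt
    (show j < n + 1 by have := (Finset.mem_Icc.1 hj).2; omega) p a y]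
  ring

lemma integral_chi_mul (N m : ℕ) (μ : Measure (SSp N)) (p : SSp N) (f : SSp N → ℝ) :
    ∫ x, chi N m p x * f x ∂μ = ∫ x in cyl N (m + 1) p, f x ∂μ := by
  rw [← integral_indicator (isClopen_cyl N (m + 1) p).isOpen.measurableSet]
  refine integral_congr_ae (Filter.Eventually.of_forall fun x => ?_)
  simp [chi, Set.indicator_apply]

/-- for continuous `f`, `p ∈ V_* ∖ V_0` and every `m ≥ κ_p`,
`H_m (G_μ f)(p) = −∫ χ_p^m f dμ = −∫_{[p_1 ⋯ p_{m+1}]} f dμ`. -/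
theorem statement16 (N : ℕ) (hN : 2 ≤ N)
    (μ : Measure (SSp N)) [IsProbabilityMeasure μ] (hμ : IsBernoulli N μ)
    (f : SSp N → ℝ) (hf : Continuous f)
    (p : SSp N) (k : ℕ) (hpk : p ∈ V N k) (hp0 : p ∉ V N 0) :
    ∀ m : ℕ, kappa N p ≤ m →
      H N m (Gop N μ f) p = -∫ x, chi N m p x * f x ∂μ ∧
      H N m (Gop N μ f) p = -∫ x in cyl N (m + 1) p, f x ∂μ := by
  have hκ : p ∈ V N (kappa N p) := Nat.sInf_mem (s := {j | p ∈ V N j}) ⟨k, hpk⟩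
  have hκ1 : 1 ≤ kappa N p := by
    rw [Nat.one_le_iff_ne_zero]
    intro h
    exact hp0 (h ▸ hκ)
  have hmem : ∀ i, kappa N p ≤ i → p ∈ V N i := fun i hi =>
    mem_V.2 fun j hj => mem_V.1 hκ j (hi.trans hj)
  have hjump : p (kappa N p - 1) ≠ p (kappa N p) := by
    intro h
    have hlt : kappa N p - 1 < kappa N p := by omega
    refine Nat.notMem_of_lt_sInf (s := {j | p ∈ V N j}) hlt (mem_V.2 fun i hi => ?_)
    rcases hi.eq_or_lt with rfl | hi
    · rwa [Nat.sub_add_cancel hκ1]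
    · exact mem_V.1 hκ i (by omega)
  have key : ∀ m, kappa N p ≤ m → H N m (Gop N μ f) p = -∫ x, chi N m p x * f x ∂μ := by
    intro m hm
    induction m, hm using Nat.le_induction with
    | base =>
      rw [H, Finset.Icc_self, Finset.sum_singleton, sum_U_Gop hN hμ hf hκ1 hκ,
        ← integral_neg]
      simp only [sum_U_greenTerm_of_ne hκ1 hκ hjump, neg_mul]
    | succ n hn ih =>
      have hint : ∀ j, Integrable (fun y => chi N j p y * f y) μ := fun j =>
        integrable_of_continuous μ ((continuous_chi N j p).mul hf)
      have hs := hmem (n + 1) (by omega)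
      rw [H] at ih
      rw [H, Finset.sum_Icc_succ_top (by omega), ih, sum_U_Gop hN hμ hf (by omega) hs]
      simp only [sum_U_greenTerm_of_eq hs (mem_V.1 hκ n hn), sub_mul]
      rw [integral_sub (hint _) (hint _)]
      ring
  intro m hm
  exact ⟨key m hm, integral_chi_mul N m μ p f ▸ key m hm⟩
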